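/- Let P be a finite pure weighted graded poset of rank d with a standard weight scheme, in which every element of positive rank covers at least two elements, and suppose P possesses Property AL. Then for every 0 ≤ l ≤ d−1 and every f ∈ C^l: ⟨A_l f, f⟩ = Σ_{s∈P(l−1)} m(s)·⟨A_s f_s, f_s⟩_s, where A_s is the 0-th adjacency operator of the link P_s and f_s the localization of f to P_s. -/

import Mathlib

open Finset

attribute [local instance] Classical.propDecidable

noncomputable section

/-- A finite pure weighted graded poset of rank `d`, presented as a rank function
and a weight scheme on a finite partial order `P`. -/
structure WGP (P : Type) [Fintype P] [PartialOrder P] where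
  /-- the rank of the poset -/
  d : ℤ
  /-- the rank function -/
  rk : P → ℤ
  rk_mono : Monotone rk
  rk_lb : ∀ x, -1 ≤ rk x
  rk_ub : ∀ x, rk x ≤ d
  rk_covBy : ∀ a b : P, a ⋖ b → rk b = rk a + 1
  bot_unique : ∃! x : P, rk x = -1
  isPure : ∀ x : P, ∃ y : P, rk y = d ∧ x ≤ y
  /-- the weight function -/
  m : P → ℝ
  m_pos : ∀ x, 0 < m x
  /-- the transition probabilities: `p y x` is `p_{y → x}` -/
  p : P → P → ℝ
  p_nonneg : ∀ y x, 0 ≤ p y x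
  p_pos_iff : ∀ y x, 0 < p y x ↔ x ⋖ y
  p_sum : ∀ y, 0 ≤ rk y → ∑ x ∈ univ.filter (fun x => x ⋖ y), p y x = 1
  m_eq : ∀ x, rk x < d → m x = ∑ y ∈ univ.filter (fun y => x ⋖ y), p y x * m y
  m_bot : ∀ x, rk x = -1 → m x = 1

/-- `T` has at most `n` eigenvalues greater than `c`, counted with
(geometric) multiplicity. -/
def eigMultAboveLe {V : Type*} [AddCommGroup V] [Module ℝ V]
    (T : Module.End ℝ V) (c : ℝ) (n : ℕ) : Prop :=
  ∀ s : Finset ℝ, (∀ μ ∈ s, c < μ) →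
    ∑ μ ∈ s, Module.finrank ℝ (T.eigenspace μ) ≤ n

/-- `μ` is the second largest eigenvalue of `T`, counted with multiplicity. -/
def IsSecondLargestEig {V : Type*} [AddCommGroup V] [Module ℝ V]
    (T : Module.End ℝ V) (μ : ℝ) : Prop :=
  T.HasEigenvalue μ ∧ eigMultAboveLe T μ 1 ∧
    ∃ s : Finset ℝ, (∀ ν ∈ s, μ ≤ ν) ∧
      2 ≤ ∑ ν ∈ s, Module.finrank ℝ (T.eigenspace ν)

/-- `ν` is the least eigenvalue of `T`. -/
def IsLeastEig {V : Type*} [AddCommGroup V] [Module ℝ V]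
    (T : Module.End ℝ V) (ν : ℝ) : Prop :=
  T.HasEigenvalue ν ∧ ∀ c : ℝ, T.HasEigenvalue c → ν ≤ c

/-- `λ(T) ≤ lam`, i.e. the second largest eigenvalue of `T` (with multiplicity)
is at most `lam` and the least eigenvalue is at least `-lam`. -/
def lamBd {V : Type*} [AddCommGroup V] [Module ℝ V]
    (T : Module.End ℝ V) (lam : ℝ) : Prop :=
  eigMultAboveLe T lam 1 ∧ ∀ c : ℝ, T.HasEigenvalue c → -lam ≤ c

namespace WGP

variable {P : Type} [Fintype P] [PartialOrder P] (W : WGP P)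

/-- The level set `P(i)`. -/
def lvl (i : ℤ) : Finset P := univ.filter (fun x => W.rk x = i)

/-- The weighted inner product on `C^i`. -/
def innerAt (i : ℤ) (f g : P → ℝ) : ℝ := ∑ x ∈ W.lvl i, W.m x * f x * g x

/-- The squared norm on `C^i`. -/
def normSqAt (i : ℤ) (f : P → ℝ) : ℝ := W.innerAt i f f

/-- The norm on `C^i`. -/
def normAt (i : ℤ) (f : P → ℝ) : ℝ := Real.sqrt (W.normSqAt i f)

/-- The matrix of transition probabilities : entry `(y, x)` is `p_{y→x}`,
which vanishes unless `x ⋖ y`.  This is also the matrix of the up operator. -/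
def upMat : Matrix P P ℝ := Matrix.of fun y x => W.p y x

/-- The matrix of the down operator. -/
def downMat : Matrix P P ℝ := Matrix.of fun x y => W.p y x * W.m y / W.m x

/-- The up operator `U`. -/
def Up (f : P → ℝ) : P → ℝ := W.upMat.mulVec f

/-- The down operator `D`. -/
def Down (f : P → ℝ) : P → ℝ := W.downMat.mulVec f

/-- `chSum x y = Σ_{c ∈ Ch(y→x)} p(c)`, the total `p`-weight of maximal chains
from `x` up to `y` (the entry of the corresponding power of the transition
matrix). -/
def chSum (x y : P) : ℝ := (W.upMat ^ (W.rk y - W.rk x).toNat) y x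

/-- The induced weight function of the link `P_x`. -/
def mL (x y : P) : ℝ := W.m y / W.m x * W.chSum x y

/-- The induced transition probabilities of the link `P_x` :
`pL x z y = (p_x)_{z → y}`. -/
def pL (x z y : P) : ℝ := W.p z y * W.chSum x y / W.chSum x z

/-- The level set `P_x(j)` of the link of `x`. -/
def linkLvl (x : P) (j : ℤ) : Finset P :=
  univ.filter (fun y => x ≤ y ∧ W.rk y = W.rk x + 1 + j)

/-- The inner product of the link `P_x` at link-level `j`. -/
def innerL (x : P) (j : ℤ) (f g : P → ℝ) : ℝ :=
  ∑ y ∈ W.linkLvl x j, W.mL x y * f y * g y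

/-- The matrix of the up operator of the link `P_x`. -/
def upMatL (x : P) : Matrix P P ℝ :=
  Matrix.of fun z y => if y ⋖ z ∧ x ≤ y then W.pL x z y else 0

/-- The matrix of the down operator of the link `P_x`. -/
def downMatL (x : P) : Matrix P P ℝ :=
  Matrix.of fun y z => if y ⋖ z then W.pL x z y * W.mL x z / W.mL x y else 0

/-- The up operator of the link `P_x`. -/
def UpL (x : P) (f : P → ℝ) : P → ℝ := (W.upMatL x).mulVec f

/-- The down operator of the link `P_x`. -/
def DownL (x : P) (f : P → ℝ) : P → ℝ := (W.downMatL x).mulVec f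

/-- The up-down walk `M^+_{x,0}` of the link `P_x`. -/
def MplusL (x : P) (f : P → ℝ) : P → ℝ := W.DownL x (W.UpL x f)

/-- The down-up walk `M^-_{x,0}` of the link `P_x`. -/
def MminusL (x : P) (f : P → ℝ) : P → ℝ := W.UpL x (W.DownL x f)

/-- The adjacency matrix. -/
def adjMat : Matrix P P ℝ := Matrix.of fun y x =>
  if x = y then 0 else
    ∑ z ∈ univ.filter (fun z => x ⋖ z ∧ y ⋖ z),
      W.m z * W.p z x * W.p z y / ((1 - W.p z y) * W.m y)

/-- The adjacency operator. -/
def Adj (f : P → ℝ) : P → ℝ := W.adjMat.mulVec f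

/-- The adjacency matrix of the link `P_x`. -/
def adjMatL (x : P) : Matrix P P ℝ := Matrix.of fun y w =>
  if w = y then 0 else
    ∑ z ∈ univ.filter (fun z => w ⋖ z ∧ y ⋖ z),
      W.mL x z * W.pL x z w * W.pL x z y / ((1 - W.pL x z y) * W.mL x y)

/-- The adjacency operator of the link `P_x`. -/
def AdjL (x : P) (f : P → ℝ) : P → ℝ := (W.adjMatL x).mulVec f

/-- The up-down walk `M^+_l` as an endomorphism of `C^l`. -/
def MplusEnd (l : ℤ) : Module.End ℝ ({x : P // W.rk x = l} → ℝ) :=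
  ((W.downMat * W.upMat).submatrix Subtype.val Subtype.val).mulVecLin

/-- The up-down walk `M^+_{x,0}` as an endomorphism of `C^0(P_x)`. -/
def MplusEndL (x : P) : Module.End ℝ ({y : P // x ⋖ y} → ℝ) :=
  ((W.downMatL x * W.upMatL x).submatrix Subtype.val Subtype.val).mulVecLin

/-- The adjacency operator `A_x` of the link `P_x` as an endomorphism of
`C^0(P_x)`. -/
def AdjEndL (x : P) : Module.End ℝ ({y : P // x ⋖ y} → ℝ) :=
  ((W.adjMatL x).submatrix Subtype.val Subtype.val).mulVecLin

/-- A standard weight scheme. -/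
def Standard : Prop :=
  ∀ y x : P, x ⋖ y → W.p y x = 1 / ((univ.filter (fun z => z ⋖ y)).card : ℝ)

/-- `P` is lower regular at level `i` with constant `N`. -/
def LowerRegAt (i : ℤ) (N : ℕ) : Prop :=
  ∀ y : P, W.rk y = i → (univ.filter (fun z => z ⋖ y)).card = N

/-- `P` is middle regular at level `i` with constant `N`. -/
def MiddleRegAt (i : ℤ) (N : ℕ) : Prop :=
  ∀ x z : P, W.rk x = i + 1 → W.rk z = i - 1 → z < x →
    (univ.filter (fun y => z ⋖ y ∧ y ⋖ x)).card = N

/-- `P` is `∨∧`-regular at level `i` with constant `N`. -/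
def WedgeRegAt (i : ℤ) (N : ℕ) : Prop :=
  ∀ y₁ y₂ : P, W.rk y₁ = i → W.rk y₂ = i → y₁ ≠ y₂ → (∃ z, y₁ ⋖ z ∧ y₂ ⋖ z) →
    (univ.filter (fun s => s ⋖ y₁ ∧ s ⋖ y₂)).card = N

/-- `P` is `⅄`-regular with constant `R`. -/
def WyeReg (R : ℕ) : Prop :=
  ∀ u y₁ y₂ : P, W.rk u = 2 → W.rk y₁ = 0 → W.rk y₂ = 0 → y₁ ≠ y₂ →
    y₁ < u → y₂ < u →
    (univ.filter (fun z => y₁ ⋖ z ∧ y₂ ⋖ z ∧ z ⋖ u)).card = R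

/-- Property UL.1 with constants `c`. -/
def UL1 (c : ℤ → ℝ) : Prop :=
  ∀ l : ℤ, 0 ≤ l → l < W.d → ∀ y : P, W.rk y = l → ∀ x : P, y ⋖ x →
    ∑ z ∈ univ.filter (fun z => z ⋖ y), W.p y z ^ 2 / W.chSum z x = c l

/-- Property UL.2 with constants `c`. -/
def UL2 (c : ℤ → ℝ) : Prop :=
  ∀ l : ℤ, 0 ≤ l → l < W.d → ∀ y₁ y₂ : P, W.rk y₁ = l → W.rk y₂ = l → y₁ ≠ y₂ →
    ∀ x : P, y₁ ⋖ x → y₂ ⋖ x →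
    ∑ z ∈ univ.filter (fun z => z ⋖ y₁ ∧ z ⋖ y₂),
      W.p y₁ z * W.p y₂ z / W.chSum z x = c l

/-- Property UL.3 with constants `c`. -/
def UL3 (c : ℤ → ℝ) : Prop :=
  ∀ l : ℤ, 0 ≤ l → l < W.d → ∀ y : P, W.rk y = l →
    ∑ x ∈ univ.filter (fun x => y ⋖ x), W.m x * W.p x y ^ 2 = c l * W.m y

/-- Property AL. -/
def AL : Prop :=
  ∀ l : ℤ, 0 ≤ l → l ≤ W.d - 1 → ∀ x y : P, W.rk x = l → W.rk y = l → x ≠ y →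
    ∑ z ∈ univ.filter (fun z => x ⋖ z ∧ y ⋖ z),
        W.m z * W.p z x * W.p z y / (1 - W.p z x)
    = ∑ z ∈ univ.filter (fun z => x ⋖ z ∧ y ⋖ z),
        W.m z * W.p z x * W.p z y *
          ∑ s ∈ univ.filter (fun s => s ⋖ x ∧ s ⋖ y),
            W.p x s * W.p y s / (W.chSum s z - W.p z x * W.p x s)

/-- Equation TL.1 with constant `c`. -/
def TL1 (c : ℝ) : Prop :=
  ∀ y : P, W.rk y = 0 →
    c * W.m y = ∑ z ∈ univ.filter (fun z => y ⋖ z), W.m z * W.p z y ^ 2 *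
      ∑ x ∈ univ.filter (fun x => x ⋖ z ∧ x ≠ y), W.p z x / (1 - W.p z x) ^ 2

/-- Equation TL.2 with constant `c`. -/
def TL2 (c : ℝ) : Prop :=
  ∀ y₁ y₂ : P, W.rk y₁ = 0 → W.rk y₂ = 0 → y₁ ≠ y₂ →
    c * ∑ z ∈ univ.filter (fun z => y₁ ⋖ z ∧ y₂ ⋖ z),
          W.m z * W.p z y₁ * W.p z y₂ / (1 - W.p z y₁)
    = ∑ z ∈ univ.filter (fun z => y₁ ⋖ z ∧ y₂ ⋖ z),
        W.m z * W.p z y₁ * W.p z y₂ *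
          ∑ x ∈ univ.filter (fun x => x ⋖ z ∧ x ≠ y₁ ∧ x ≠ y₂),
            W.p z x / (1 - W.p z x) ^ 2

/-- Equation TL.3 with constant `c`. -/
def TL3 (c : ℝ) : Prop :=
  ∀ y : P, W.rk y = 0 →
    c * W.m y =
      ∑ x ∈ univ.filter (fun x => W.rk x = 0 ∧ x ≠ y),
        ∑ z ∈ univ.filter (fun z => x ⋖ z ∧ y ⋖ z),
          ∑ w ∈ univ.filter (fun w => w ≠ z ∧ x ⋖ w ∧ y ⋖ w),
            ∑ u ∈ univ.filter (fun u => z ⋖ u ∧ w ⋖ u),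
              W.m u * W.p u z * W.p u w * W.p w y * W.p z y * W.p w x * W.p z x /
                (W.chSum x u * (1 - W.p u z * W.p z x / W.chSum x u) *
                  (1 - W.p w x) * (1 - W.p z x))

/-- Equation TL.4 with constant `c`. -/
def TL4 (c : ℝ) : Prop :=
  ∀ y₁ y₂ : P, W.rk y₁ = 0 → W.rk y₂ = 0 → y₁ ≠ y₂ →
    c * ∑ z ∈ univ.filter (fun z => y₁ ⋖ z ∧ y₂ ⋖ z),
          W.m z * W.p z y₁ * W.p z y₂ / (1 - W.p z y₁)
    = ∑ x ∈ univ.filter (fun x => W.rk x = 0 ∧ x ≠ y₁ ∧ x ≠ y₂),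
        ∑ z ∈ univ.filter (fun z => x ⋖ z ∧ y₂ ⋖ z),
          ∑ w ∈ univ.filter (fun w => w ≠ z ∧ x ⋖ w ∧ y₁ ⋖ w),
            ∑ u ∈ univ.filter (fun u => z ⋖ u ∧ w ⋖ u),
              W.m u * W.p u z * W.p u w * W.p w y₁ * W.p z y₂ * W.p w x * W.p z x /
                (W.chSum x u * (1 - W.p u z * W.p z x / W.chSum x u) *
                  (1 - W.p w x) * (1 - W.p z x))

/-- The induced function `f̂_x ∈ C^0(P_x)` of `f ∈ C^0`. -/
def hatF (x : P) (f : P → ℝ) : P → ℝ := fun z =>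
  (1 / (1 - W.p z x)) * ∑ y ∈ univ.filter (fun y => y ≠ x ∧ y ⋖ z), W.p z y * f y

/-- `P` is connected: the Markov chain `M^+_0` on `P(0)` is irreducible. -/
def Connected : Prop :=
  ∀ y z : P, W.rk y = 0 → W.rk z = 0 →
    ∃ j : ℕ, 0 < j ∧ ((W.downMat * W.upMat) ^ j) z y ≠ 0

/-- The link `P_x` is connected: the Markov chain `M^+_{x,0}` on `P_x(0)` is
irreducible. -/
def LinkConnected (x : P) : Prop :=
  ∀ y z : P, x ⋖ y → x ⋖ z →
    ∃ j : ℕ, 0 < j ∧ ((W.downMatL x * W.upMatL x) ^ j) z y ≠ 0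

/-- `c` is a nontrivial eigenvalue of the adjacency operator `A` of `P`,
i.e. one with an eigenvector orthogonal to the constants. -/
def IsNontrivEigAdj (c : ℝ) : Prop :=
  ∃ f : P → ℝ, (∃ y, W.rk y = 0 ∧ f y ≠ 0) ∧
    (∀ y, W.rk y = 0 → W.Adj f y = c * f y) ∧
    W.innerAt 0 f (fun _ => 1) = 0

/-- `c` is a nontrivial eigenvalue of the adjacency operator `A_x` of the
link `P_x`. -/
def IsNontrivEigAdjL (x : P) (c : ℝ) : Prop :=
  ∃ f : P → ℝ, (∃ y, x ⋖ y ∧ f y ≠ 0) ∧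
    (∀ y, x ⋖ y → W.AdjL x f y = c * f y) ∧
    W.innerL x 0 f (fun _ => 1) = 0

end WGP

/-!
It suffices to compare the coefficients of `f w * g y` for `w ≠ y`. On the global side,
`m(y) A_l(y, w)` is the left-hand side of Property AL for the pair `y, w`. In the link of an
element `s` of rank `l - 1` the normalising chain sums cancel, and `m(s) m_s(y) A_s(y, w)` is the
part of the right-hand side of Property AL contributed by `s`; summing over `s` gives the identity.
-/

namespace WGP

variable {P : Type} [Fintype P] [PartialOrder P] (W : WGP P) {s w x y z : P}

theorem p_eq_zero_of_not_covBy (h : ¬x ⋖ y) : W.p y x = 0 :=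
  (W.p_nonneg y x).eq_of_not_lt' fun hp => h ((W.p_pos_iff y x).1 hp)

theorem chSum_of_rk_le (h : W.rk y ≤ W.rk x) : W.chSum x y = if y = x then 1 else 0 := by
  rw [chSum, Int.toNat_of_nonpos (sub_nonpos.2 h), pow_zero, Matrix.one_apply]

theorem chSum_of_rk_eq_add_one (h : W.rk y = W.rk x + 1) : W.chSum x y = W.p y x := by
  simp [chSum, h, upMat]

theorem chSum_eq_sum_of_rk_lt (h : W.rk x < W.rk z) :
    W.chSum x z = ∑ y, W.p z y * W.chSum x y := by
  obtain ⟨n, hn⟩ : ∃ n : ℕ, W.rk z = W.rk x + n + 1 :=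
    ⟨(W.rk z - W.rk x - 1).toNat, by omega⟩
  have hz : (W.rk z - W.rk x).toNat = n + 1 := by omega
  rw [chSum, hz, pow_succ', Matrix.mul_apply]
  refine sum_congr rfl fun y _ => ?_
  by_cases hyz : y ⋖ z
  · have hy : (W.rk y - W.rk x).toNat = n := by
      have := W.rk_covBy y z hyz
      omega
    simp only [upMat, Matrix.of_apply, chSum, hy]
  · simp [upMat, W.p_eq_zero_of_not_covBy hyz]

theorem chSum_eq_zero_of_not_le (h : ¬x ≤ z) : W.chSum x z = 0 := by
  induction z using WellFoundedLT.induction with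
  | ind z ih =>
    rcases lt_or_ge (W.rk x) (W.rk z) with hlt | hge
    · rw [W.chSum_eq_sum_of_rk_lt hlt]
      refine sum_eq_zero fun y _ => ?_
      by_cases hyz : y ⋖ z
      · rw [ih y hyz.lt fun hxy => h (hxy.trans hyz.le), mul_zero]
      · rw [W.p_eq_zero_of_not_covBy hyz, zero_mul]
    · rw [W.chSum_of_rk_le hge, if_neg fun hzx => h hzx.ge]

theorem chSum_pos (h : x ≤ z) : 0 < W.chSum x z := by
  induction z using WellFoundedLT.induction with
  | ind z ih =>
    rcases h.eq_or_lt with rfl | hlt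
    · simp [W.chSum_of_rk_le le_rfl]
    · obtain ⟨y, hxy, hyz⟩ := exists_le_covBy_of_lt hlt
      have hrk : W.rk x < W.rk z := by
        have := W.rk_mono hxy
        have := W.rk_covBy y z hyz
        omega
      rw [W.chSum_eq_sum_of_rk_lt hrk]
      refine sum_pos' (fun u _ => ?_)
        ⟨y, mem_univ y, mul_pos ((W.p_pos_iff z y).2 hyz) (ih y hyz.lt hxy)⟩
      by_cases hu : u ⋖ z ∧ x ≤ u
      · exact mul_nonneg (W.p_nonneg z u) (ih u hu.1.lt hu.2).le
      · rcases not_and_or.1 hu with huz | hxu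
        · rw [W.p_eq_zero_of_not_covBy huz, zero_mul]
        · rw [W.chSum_eq_zero_of_not_le hxu, mul_zero]

theorem innerL_eq_sum_lvl (x : P) (j : ℤ) (f g : P → ℝ) :
    W.innerL x j f g = ∑ y ∈ W.lvl (W.rk x + 1 + j), W.mL x y * f y * g y := by
  refine sum_subset (fun y hy => ?_) fun y hy hy' => ?_
  · simp only [linkLvl, lvl, mem_filter_univ] at hy ⊢
    exact hy.2
  · simp only [linkLvl, lvl, mem_filter_univ] at hy hy'
    have hxy : ¬x ≤ y := fun hxy => hy' ⟨hxy, hy⟩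
    simp only [mL, W.chSum_eq_zero_of_not_le hxy, mul_zero, zero_mul]

theorem sum_filter_covBy_and_covBy_eq_sum_lvl {a : P → ℝ} (hy : ∀ s, ¬s ⋖ y → a s = 0)
    (hw : ∀ s, ¬s ⋖ w → a s = 0) :
    ∑ s ∈ univ.filter (fun s => s ⋖ y ∧ s ⋖ w), a s = ∑ s ∈ W.lvl (W.rk y - 1), a s := by
  refine sum_subset (fun s hs => ?_) fun s _ hs => ?_
  · simp only [lvl, mem_filter_univ] at hs ⊢
    have := W.rk_covBy s y hs.1
    omega
  · rw [mem_filter_univ, not_and_or] at hs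
    exact hs.elim (hy s) (hw s)

theorem m_mul_adjMat (hyw : y ≠ w) :
    W.m y * W.adjMat y w = ∑ z ∈ univ.filter (fun z => y ⋖ z ∧ w ⋖ z),
      W.m z * W.p z y * W.p z w / (1 - W.p z y) := by
  have hm := (W.m_pos y).ne'
  simp only [adjMat, Matrix.of_apply, if_neg hyw.symm, mul_sum, and_comm (a := w ⋖ _)]
  refine sum_congr rfl fun z _ => ?_
  field_simp

theorem m_mul_mL_mul_adjMatL_summand (hsy : s ⋖ y) (hyz : y ⋖ z) (hwz : w ⋖ z) :
    W.m s * W.mL s y *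
        (W.mL s z * W.pL s z w * W.pL s z y / ((1 - W.pL s z y) * W.mL s y)) =
      W.m z * W.p z y * W.p z w *
        (W.p y s * W.p w s / (W.chSum s z - W.p z y * W.p y s)) := by
  have hrky := W.rk_covBy s y hsy
  have hrkw : W.rk w = W.rk s + 1 := by
    have := W.rk_covBy y z hyz
    have := W.rk_covBy w z hwz
    omega
  have hc := (W.chSum_pos (hsy.le.trans hyz.le)).ne'
  have hms := (W.m_pos s).ne'
  have hmy := (W.m_pos y).ne'
  simp only [mL, pL, W.chSum_of_rk_eq_add_one hrky, W.chSum_of_rk_eq_add_one hrkw,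
    one_sub_div hc]
  field_simp

theorem m_mul_mL_mul_adjMatL (hyw : y ≠ w) (hsy : W.rk y = W.rk s + 1) :
    W.m s * W.mL s y * W.adjMatL s y w = ∑ z ∈ univ.filter (fun z => y ⋖ z ∧ w ⋖ z),
      W.m z * W.p z y * W.p z w *
        (W.p y s * W.p w s / (W.chSum s z - W.p z y * W.p y s)) := by
  by_cases hcov : s ⋖ y
  · simp only [adjMatL, Matrix.of_apply, if_neg hyw.symm, mul_sum, and_comm (a := w ⋖ _)]
    refine sum_congr rfl fun z hz => ?_
    obtain ⟨hyz, hwz⟩ := (mem_filter_univ z).1 hz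
    exact W.m_mul_mL_mul_adjMatL_summand hcov hyz hwz
  · simp [mL, W.chSum_of_rk_eq_add_one hsy, W.p_eq_zero_of_not_covBy hcov]

variable {W}

theorem AL.sum_eq (hAL : W.AL) (hyw : y ≠ w) :
    ∑ z ∈ univ.filter (fun z => y ⋖ z ∧ w ⋖ z), W.m z * W.p z y * W.p z w / (1 - W.p z y) =
      ∑ z ∈ univ.filter (fun z => y ⋖ z ∧ w ⋖ z), W.m z * W.p z y * W.p z w *
        ∑ s ∈ univ.filter (fun s => s ⋖ y ∧ s ⋖ w),
          W.p y s * W.p w s / (W.chSum s z - W.p z y * W.p y s) := by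
  rcases (univ.filter fun z => y ⋖ z ∧ w ⋖ z).eq_empty_or_nonempty with hempty | ⟨z, hz⟩
  · simp only [hempty, sum_empty]
  obtain ⟨hyz, hwz⟩ := (mem_filter_univ z).1 hz
  have hrky := W.rk_covBy y z hyz
  have hrkw := W.rk_covBy w z hwz
  have hrk : W.rk w = W.rk y := by omega
  have hd := W.rk_ub z
  have hbot : W.rk y ≠ -1 := fun h => hyw (W.bot_unique.unique h (hrk.trans h))
  have hlb := W.rk_lb y
  exact hAL (W.rk y) (by omega) (by omega) y w rfl hrk hyw

theorem AL.m_mul_adjMat (hAL : W.AL) (y w : P) :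
    W.m y * W.adjMat y w = ∑ s ∈ W.lvl (W.rk y - 1), W.m s * W.mL s y * W.adjMatL s y w := by
  rcases eq_or_ne y w with rfl | hyw
  · simp [adjMat, adjMatL]
  rw [WGP.m_mul_adjMat W hyw, hAL.sum_eq hyw]
  simp only [mul_sum]
  rw [sum_comm, W.sum_filter_covBy_and_covBy_eq_sum_lvl]
  · refine sum_congr rfl fun s hs => (W.m_mul_mL_mul_adjMatL hyw ?_).symm
    rw [(mem_filter_univ s).1 hs, sub_add_cancel]
  all_goals
    intro s hs
    simp [W.p_eq_zero_of_not_covBy hs]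

theorem AL.m_mul_Adj (hAL : W.AL) (f : P → ℝ) (y : P) :
    W.m y * W.Adj f y = ∑ s ∈ W.lvl (W.rk y - 1), W.m s * (W.mL s y * W.AdjL s f y) := by
  calc W.m y * W.Adj f y
      = ∑ w, W.m y * W.adjMat y w * f w := by
        simp only [Adj, Matrix.mulVec, dotProduct, mul_sum, mul_assoc]
    _ = ∑ s ∈ W.lvl (W.rk y - 1), ∑ w, W.m s * W.mL s y * W.adjMatL s y w * f w := by
        simp only [hAL.m_mul_adjMat, sum_mul]
        exact sum_comm
    _ = ∑ s ∈ W.lvl (W.rk y - 1), W.m s * (W.mL s y * W.AdjL s f y) := by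
        simp only [AdjL, Matrix.mulVec, dotProduct, mul_sum, mul_assoc]

end WGP

theorem stmt10_general {P : Type} [Fintype P] [PartialOrder P] (W : WGP P) (hAL : W.AL)
    (l : ℤ) (f g : P → ℝ) :
    W.innerAt l (W.Adj f) g
      = ∑ s ∈ W.lvl (l - 1), W.m s * W.innerL s 0 (W.AdjL s f) g := by
  calc W.innerAt l (W.Adj f) g
      = ∑ y ∈ W.lvl l, ∑ s ∈ W.lvl (l - 1), W.m s * (W.mL s y * W.AdjL s f y * g y) := by
        refine sum_congr rfl fun y hy => ?_
        rw [hAL.m_mul_Adj, (mem_filter_univ y).1 hy, sum_mul]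
        simp only [mul_assoc]
    _ = ∑ s ∈ W.lvl (l - 1), W.m s * ∑ y ∈ W.lvl l, W.mL s y * W.AdjL s f y * g y := by
        rw [sum_comm]
        simp only [mul_sum]
    _ = ∑ s ∈ W.lvl (l - 1), W.m s * W.innerL s 0 (W.AdjL s f) g := by
        refine sum_congr rfl fun s hs => ?_
        have hl : W.rk s + 1 + 0 = l := by rw [(mem_filter_univ s).1 hs]; ring
        rw [W.innerL_eq_sum_lvl, hl]

/-- Garland-type localization of the adjacency operator under
Property AL. -/
theorem stmt10 {P : Type} [Fintype P] [PartialOrder P] (W : WGP P)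
    (hstd : W.Standard)
    (hcov : ∀ y : P, 1 ≤ W.rk y → 2 ≤ (Finset.univ.filter (fun z => z ⋖ y)).card)
    (hAL : W.AL)
    (l : ℤ) (hl0 : 0 ≤ l) (hld : l ≤ W.d - 1) (f : P → ℝ) :
    W.innerAt l (W.Adj f) f
      = ∑ s ∈ W.lvl (l - 1), W.m s * W.innerL s 0 (W.AdjL s f) f :=
  stmt10_general W hAL l f f
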